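/- For every integer m ≥ 2, every p ∈ (0,1) and every ε > 0, there exists C > 0 such that if N ≥ C · p^(−(2m−1)) · (log(1/p))², then (1−ε) · p^(C(m,2)) · (2N)^(m/2) ≤ t(K_m, p, N) ≤ (1+ε) · p^(C(m,2)) · (2N)^(m/2), where C(m,2) = m(m−1)/2 and log denotes the natural logarithm. -/

import Mathlib

open scoped Classical
namespace OnlineRamseyGame

/-- A valid Builder strategy: it never builds a loop, and along any play the
edges built are pairwise distinct. -/
def ValidBuilder {V : Type*} (B : List Bool → Sym2 V) : Prop :=
  (∀ h : List Bool, ¬ (B h).IsDiag) ∧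
  ∀ h : List Bool, ∀ i : ℕ, i < h.length → B (h.take i) ≠ B h

/-- The history (as a list) of the first `t` values of the color sequence `x`. -/
def histSeq (x : ℕ → Bool) (t : ℕ) : List Bool := (List.range t).map x

/-- Extend a finite color sequence to an infinite one (by `false`). -/
def extSeq {N : ℕ} (x : Fin N → Bool) : ℕ → Bool :=
  fun t => if h : t < N then x ⟨t, h⟩ else false

/-- The probability of the outcome `x` when each turn is independently `true`
with probability `p` and `false` with probability `1 - p`. -/
noncomputable def weight (p : ℝ) {N : ℕ} (x : Fin N → Bool) : ℝ :=
  ∏ i, if x i then p else 1 - p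

/-- The number of labeled copies of `K_m` in the graph of successful queries
within the first `N` queries. -/
noncomputable def copyCount (m : ℕ) (edge : ℕ → Sym2 ℕ) (x : ℕ → Bool) (N : ℕ) : ℕ :=
  Set.ncard {f : Fin m → ℕ | Function.Injective f ∧
    ∀ i j : Fin m, i ≠ j → ∃ t, t < N ∧ edge t = s(f i, f j) ∧ x t = true}

/-- The expected number of labeled copies of `K_m` built by strategy `Q` within
`N` queries in the Subgraph Query Game with parameter `p`. -/
noncomputable def expectedCopies (m : ℕ) (Q : List Bool → Sym2 ℕ) (N : ℕ) (p : ℝ) : ℝ :=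
  ∑ x : Fin N → Bool, weight p x *
    (copyCount m (fun t => Q (histSeq (extSeq x) t)) (extSeq x) N : ℝ)

/-- `t(K_m, p, N)`: the maximal, over all valid Builder strategies, expected
number of labeled copies of `K_m` built in `N` queries. -/
noncomputable def tQuery (m : ℕ) (p : ℝ) (N : ℕ) : ℝ :=
  sSup {E : ℝ | ∃ Q : List Bool → Sym2 ℕ, ValidBuilder Q ∧ E = expectedCopies m Q N p}

section Det
variable {V : Type*} [Fintype V]

noncomputable def KW (W : V → V → ℝ) {n : ℕ} (f : Fin n → V) : ℝ :=
  ∏ i, ∏ j, if i < j then W (f i) (f j) else 1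

noncomputable def hom (W : V → V → ℝ) (a : V → ℝ) (n : ℕ) : ℝ :=
  ∑ f : Fin n → V, (∏ i, a (f i)) * KW W f

theorem KW_cons (W : V → V → ℝ) {n : ℕ} (v : V) (f : Fin n → V) :
    KW W (Fin.cons v f : Fin (n+1) → V) = (∏ l, W v (f l)) * KW W f := by
  simp [KW, Fin.prod_univ_succ]

theorem KW_nonneg {W : V → V → ℝ} (h : ∀ x y, 0 ≤ W x y) {n : ℕ} (f : Fin n → V) :
    0 ≤ KW W f := by
  refine Finset.prod_nonneg fun i _ => Finset.prod_nonneg fun j _ => ?_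
  split_ifs
  · exact h _ _
  · exact zero_le_one

theorem KW_mono {W W' : V → V → ℝ} (h : ∀ x y, 0 ≤ W x y) (h' : ∀ x y, W x y ≤ W' x y) {n : ℕ}
    (f : Fin n → V) : KW W f ≤ KW W' f := by
  refine Finset.prod_le_prod (fun i _ => Finset.prod_nonneg fun j _ => ?_)
    fun i _ => Finset.prod_le_prod (fun j _ => ?_) fun j _ => ?_
  · split_ifs
    · exact h _ _
    · exact zero_le_one
  · split_ifs
    · exact h _ _
    · exact zero_le_one
  · split_ifs
    · exact h' _ _
    · exact le_rfl

theorem hom_zero (W : V → V → ℝ) (a : V → ℝ) : hom W a 0 = 1 := by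
  simp [hom, KW]

theorem hom_succ (W : V → V → ℝ) (a : V → ℝ) (n : ℕ) :
    hom W a (n+1) = ∑ v, a v * hom W (fun x => a x * W v x) n := by
  unfold hom
  rw [← (Fin.consEquiv (fun _ : Fin (n+1) => V)).sum_comp, Fintype.sum_prod_type]
  refine Finset.sum_congr rfl fun v _ => ?_
  rw [Finset.mul_sum]
  refine Finset.sum_congr rfl fun f _ => ?_
  have e : (Fin.consEquiv (fun _ : Fin (n+1) => V)) (v, f) = (Fin.cons v f : Fin (n+1) → V) := rfl
  rw [e, KW_cons]
  simp only [Fin.prod_univ_succ, Fin.cons_zero, Fin.cons_succ,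
    Finset.prod_mul_distrib]
  ring

theorem hom_one (W : V → V → ℝ) (a : V → ℝ) : hom W a 1 = ∑ v, a v := by
  simp [hom_succ, hom_zero]

theorem hom_nonneg {W : V → V → ℝ} {a : V → ℝ} (h : ∀ x y, 0 ≤ W x y) (ha : ∀ x, 0 ≤ a x) (n : ℕ) :
    0 ≤ hom W a n :=
  Finset.sum_nonneg fun f _ => mul_nonneg (Finset.prod_nonneg fun i _ => ha _) (KW_nonneg h f)

theorem hom_mono {W W' : V → V → ℝ} {a a' : V → ℝ} (h : ∀ x y, 0 ≤ W x y)
    (h' : ∀ x y, W x y ≤ W' x y) (ha : ∀ x, 0 ≤ a x) (ha' : ∀ x, a x ≤ a' x) (n : ℕ) :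
    hom W a n ≤ hom W' a' n :=
  Finset.sum_le_sum fun f _ => mul_le_mul (Finset.prod_le_prod (fun i _ => ha _) fun i _ => ha' _)
    (KW_mono h h' f) (KW_nonneg h f) (Finset.prod_nonneg fun i _ => (ha _).trans (ha' _))

theorem hom_kk {g : V → V → ℝ} (h0 : ∀ x y, 0 ≤ g x y) (h1 : ∀ x y, g x y ≤ 1) (n : ℕ) :
    ∀ a : V → ℝ, (∀ x, 0 ≤ a x) → (∀ x, a x ≤ 1) →
    hom g a (n+2) ≤ √(∑ x, ∑ y, a x * a y * g x y) ^ (n+2) := by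
  induction n with
  | zero =>
    intro a ha ha1
    rw [Real.sq_sqrt (Finset.sum_nonneg fun x _ => Finset.sum_nonneg fun y _ =>
      mul_nonneg (mul_nonneg (ha _) (ha _)) (h0 _ _))]
    rw [hom_succ]
    simp only [zero_add, hom_one, Finset.mul_sum, mul_assoc]
    exact le_rfl
  | succ n ih =>
    intro a ha ha1
    set E := ∑ x, ∑ y, a x * a y * g x y with hE
    have hE0 : 0 ≤ E := Finset.sum_nonneg fun x _ => Finset.sum_nonneg fun y _ =>
      mul_nonneg (mul_nonneg (ha _) (ha _)) (h0 _ _)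
    rw [show n + 1 + 2 = (n + 2) + 1 from rfl, hom_succ]
    have key : ∀ v, hom g (fun x => a x * g v x) (n+2) ≤ (∑ x, a x * g v x) * √E ^ (n+1) := by
      intro v
      have hb0 : ∀ x, 0 ≤ a x * g v x := fun x => mul_nonneg (ha _) (h0 _ _)
      have hba : ∀ x, a x * g v x ≤ a x := fun x => mul_le_of_le_one_right (ha _) (h1 _ _)
      have := ih (fun x => a x * g v x) hb0 (fun x => (hba x).trans (ha1 x))
      refine this.trans ?_
      rw [pow_succ']
      refine mul_le_mul ?_ ?_ (by positivity) (Finset.sum_nonneg fun x _ => hb0 x)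
      · refine Real.sqrt_le_iff.2 ⟨Finset.sum_nonneg fun x _ => hb0 x, ?_⟩
        rw [sq, Finset.sum_mul_sum]
        refine Finset.sum_le_sum fun x _ => Finset.sum_le_sum fun y _ => ?_
        exact mul_le_of_le_one_right (mul_nonneg (hb0 _) (hb0 _)) (h1 _ _)
      · refine pow_le_pow_left₀ (Real.sqrt_nonneg _) (Real.sqrt_le_sqrt ?_) _
        refine Finset.sum_le_sum fun x _ => Finset.sum_le_sum fun y _ => ?_
        exact mul_le_mul_of_nonneg_right (mul_le_mul (hba _) (hba _) (hb0 _) (ha _)) (h0 _ _)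
    calc _ ≤ ∑ v, a v * ((∑ x, a x * g v x) * √E ^ (n+1)) :=
          Finset.sum_le_sum fun v _ => mul_le_mul_of_nonneg_left (key v) (ha v)
      _ = E * √E ^ (n+1) := by
          rw [hE, Finset.sum_mul]
          refine Finset.sum_congr rfl fun v _ => ?_
          rw [← mul_assoc, Finset.mul_sum]
          simp only [mul_assoc]
      _ = √E ^ (n+2+1) := by
          nth_rewrite 1 [← Real.sq_sqrt hE0]
          ring

theorem star_bound {s g : V → V → ℝ} {p θ : ℝ} (hp0 : 0 ≤ p) (hp1 : p ≤ 1) (hθ : 0 ≤ θ)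
    (hs0 : ∀ x y, 0 ≤ s x y) (hsg : ∀ x y, s x y ≤ g x y) (hg1 : ∀ x y, g x y ≤ 1)
    (hsymm : ∀ x y, g x y = g y x)
    (hD : ∀ (α β : V → ℝ) (c : ℝ), ∑ x, α x ^ 2 ≤ c → ∑ x, β x ^ 2 ≤ c →
      ∑ x, ∑ y, (s x y - p * g x y) * α x * β y ≤ θ * c) (m : ℕ) :
    ∀ a : V → ℝ, (∀ x, 0 ≤ a x) → (∀ x, a x ≤ 1) →
    ∑ v, a v * hom g (fun x => a x * s v x) m ≤ p ^ m * hom g a (m+1) + m * θ * hom g a m := by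
  have hg0 : ∀ x y, 0 ≤ g x y := fun x y => (hs0 x y).trans (hsg x y)
  induction m with
  | zero =>
    intro a ha ha1
    simp [hom_zero, hom_one]
  | succ m ih =>
    intro a ha ha1
    have e1 : ∑ v, a v * hom g (fun x => a x * s v x) (m+1) =
        (∑ v, ∑ y, (s v y - p * g v y) * (a v * a y * hom g (fun x => a x * s v x * g y x) m)) +
        p * ∑ y, a y * ∑ v, (a v * g y v) * hom g (fun x => (a x * g y x) * s v x) m := by
      simp only [hom_succ, Finset.mul_sum]
      rw [Finset.sum_comm (f := fun y v => p * (a y * ((a v * g y v) * _))),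
        ← Finset.sum_add_distrib]
      refine Finset.sum_congr rfl fun v _ => ?_
      rw [← Finset.sum_add_distrib]
      refine Finset.sum_congr rfl fun y _ => ?_
      have : (fun x => a x * g y x * s v x) = (fun x => a x * s v x * g y x) := by
        ext x; ring
      rw [this, hsymm y v]
      ring
    have e2 : (∑ v, ∑ y, (s v y - p * g v y) *
        (a v * a y * hom g (fun x => a x * s v x * g y x) m)) ≤ θ * hom g a (m+1) := by
      have : (∑ v, ∑ y, (s v y - p * g v y) *
          (a v * a y * hom g (fun x => a x * s v x * g y x) m)) =
          ∑ r : Fin m → V, ((∏ i, a (r i)) * KW g r) * ∑ v, ∑ y, (s v y - p * g v y) *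
            (a v * ∏ l, s v (r l)) * (a y * ∏ l, g y (r l)) := by
        simp only [hom, Finset.mul_sum]
        rw [Finset.sum_comm (s := (Finset.univ : Finset (Fin m → V)))]
        refine Finset.sum_congr rfl fun v _ => ?_
        rw [Finset.sum_comm (s := (Finset.univ : Finset (Fin m → V)))]
        refine Finset.sum_congr rfl fun y _ => ?_
        refine Finset.sum_congr rfl fun r _ => ?_
        simp only [Finset.prod_mul_distrib]
        ring
      rw [this]
      have e3 : hom g a (m+1) = ∑ r : Fin m → V, ((∏ i, a (r i)) * KW g r) *
          ∑ v, a v * ∏ l, g v (r l) := by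
        rw [hom_succ]
        simp only [hom, Finset.mul_sum]
        rw [Finset.sum_comm]
        refine Finset.sum_congr rfl fun r _ => Finset.sum_congr rfl fun v _ => ?_
        simp only [Finset.prod_mul_distrib]
        ring
      rw [e3, Finset.mul_sum]
      refine Finset.sum_le_sum fun r _ => ?_
      rw [mul_left_comm]
      refine mul_le_mul_of_nonneg_left ?_
        (mul_nonneg (Finset.prod_nonneg fun i _ => ha _) (KW_nonneg hg0 r))
      have hle : ∀ v, a v * ∏ l, s v (r l) ≤ a v * ∏ l, g v (r l) := fun v =>
        mul_le_mul_of_nonneg_left (Finset.prod_le_prod (fun _ _ => hs0 _ _) fun _ _ => hsg _ _) (ha v)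
      have h0 : ∀ v, 0 ≤ a v * ∏ l, s v (r l) := fun v =>
        mul_nonneg (ha v) (Finset.prod_nonneg fun _ _ => hs0 _ _)
      have h1 : ∀ v, a v * ∏ l, g v (r l) ≤ 1 := fun v =>
        mul_le_one₀ (ha1 v) (Finset.prod_nonneg fun _ _ => hg0 _ _)
          (Finset.prod_le_one (fun _ _ => hg0 _ _) fun _ _ => hg1 _ _)
      refine hD _ _ _ ?_ ?_
      · refine Finset.sum_le_sum fun v _ => ?_
        have := hle v; have := h0 v; have := h1 v
        nlinarith
      · refine Finset.sum_le_sum fun v _ => ?_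
        have := hle v; have := h0 v; have := h1 v
        nlinarith
    have e4 : ∑ y, a y * ∑ v, (a v * g y v) * hom g (fun x => (a x * g y x) * s v x) m ≤
        p ^ m * hom g a (m+2) + m * θ * hom g a (m+1) := by
      rw [hom_succ g a (m+1), hom_succ g a m, Finset.mul_sum, Finset.mul_sum,
        ← Finset.sum_add_distrib]
      refine Finset.sum_le_sum fun y _ => ?_
      have := ih (fun x => a x * g y x) (fun x => mul_nonneg (ha x) (hg0 _ _))
        (fun x => mul_le_one₀ (ha1 x) (hg0 _ _) (hg1 _ _))
      have := mul_le_mul_of_nonneg_left this (ha y)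
      refine this.trans (le_of_eq ?_)
      ring
    rw [e1]
    have h5 : 0 ≤ m * θ * hom g a (m+1) :=
      mul_nonneg (mul_nonneg (Nat.cast_nonneg _) hθ) (hom_nonneg hg0 ha _)
    have h6 := mul_le_mul_of_nonneg_left e4 hp0
    have h7 : p * (m * θ * hom g a (m+1)) ≤ m * θ * hom g a (m+1) := mul_le_of_le_one_left h5 hp1
    push_cast
    rw [pow_succ]
    nlinarith

theorem count_bound {s g : V → V → ℝ} {p θ : ℝ} (hp0 : 0 ≤ p) (hp1 : p ≤ 1) (hθ : 0 ≤ θ)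
    (hs0 : ∀ x y, 0 ≤ s x y) (hsg : ∀ x y, s x y ≤ g x y) (hg1 : ∀ x y, g x y ≤ 1)
    (hsymm : ∀ x y, g x y = g y x)
    (hD : ∀ (α β : V → ℝ) (c : ℝ), ∑ x, α x ^ 2 ≤ c → ∑ x, β x ^ 2 ≤ c →
      ∑ x, ∑ y, (s x y - p * g x y) * α x * β y ≤ θ * c) (m : ℕ) :
    ∀ a : V → ℝ, (∀ x, 0 ≤ a x) → (∀ x, a x ≤ 1) →
    hom s a (m+1) ≤ p ^ ((m+1).choose 2) * hom g a (m+1) + ((m+1).choose 2) * θ * hom g a m := by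
  have hg0 : ∀ x y, 0 ≤ g x y := fun x y => (hs0 x y).trans (hsg x y)
  induction m with
  | zero =>
    intro a ha ha1
    simp [hom_one]
  | succ m ih =>
    intro a ha ha1
    have hk : (m+1+1).choose 2 = (m+1) + (m+1).choose 2 := by
      rw [Nat.choose_succ_succ' (m+1) 1, Nat.choose_one_right]
    set k := (m+1).choose 2 with hkdef
    rw [hk, hom_succ s]
    have e1 : ∑ v, a v * hom s (fun x => a x * s v x) (m+1) ≤
        p ^ k * ∑ v, a v * hom g (fun x => a x * s v x) (m+1) +
        k * θ * ∑ v, a v * hom g (fun x => a x * s v x) m := by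
      rw [Finset.mul_sum, Finset.mul_sum, ← Finset.sum_add_distrib]
      refine Finset.sum_le_sum fun v _ => ?_
      have := ih (fun x => a x * s v x) (fun x => mul_nonneg (ha x) (hs0 _ _))
        (fun x => mul_le_one₀ (ha1 x) (hs0 _ _) ((hsg _ _).trans (hg1 _ _)))
      refine (mul_le_mul_of_nonneg_left this (ha v)).trans (le_of_eq ?_)
      ring
    have e2 : ∑ v, a v * hom g (fun x => a x * s v x) m ≤ hom g a (m+1) := by
      rw [hom_succ g a m]
      refine Finset.sum_le_sum fun v _ => mul_le_mul_of_nonneg_left ?_ (ha v)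
      exact hom_mono hg0 (fun _ _ => le_rfl) (fun x => mul_nonneg (ha x) (hs0 _ _))
        (fun x => mul_le_mul_of_nonneg_left (hsg _ _) (ha x)) _
    have e3 := star_bound hp0 hp1 hθ hs0 hsg hg1 hsymm hD (m+1) a ha ha1
    have h5 : 0 ≤ ((m+1 : ℕ) : ℝ) * θ * hom g a (m+1) :=
      mul_nonneg (mul_nonneg (Nat.cast_nonneg _) hθ) (hom_nonneg hg0 ha _)
    have h6 := mul_le_mul_of_nonneg_left e3 (pow_nonneg hp0 k)
    have h7 := mul_le_of_le_one_left h5 (pow_le_one₀ hp0 hp1 (n := k))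
    have h8 := mul_le_mul_of_nonneg_left e2 (mul_nonneg (Nat.cast_nonneg k) hθ)
    rw [pow_add]
    push_cast at *
    nlinarith

/-- Removing heavy vertices. -/
theorem heavy_bound {s : V → V → ℝ} {l : V → ℝ} (hs0 : ∀ x y, 0 ≤ s x y) (hs1 : ∀ x y, s x y ≤ 1)
    (hl0 : ∀ x, 0 ≤ l x) (hl1 : ∀ x, l x ≤ 1) (n : ℕ) :
    ∀ a : V → ℝ, (∀ x, 0 ≤ a x) → (∀ x, a x ≤ 1) →
    hom s a (n+1) ≤ hom s (fun x => a x * l x) (n+1) + (n+1) * (∑ x, (1 - l x)) * hom s a n := by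
  have hh : 0 ≤ ∑ x, (1 - l x) := Finset.sum_nonneg fun x _ => by linarith [hl1 x]
  induction n with
  | zero =>
    intro a ha ha1
    simp only [zero_add, hom_one, hom_zero]
    simp only [Nat.cast_zero, zero_add, one_mul, mul_one]
    rw [← Finset.sum_add_distrib]
    refine Finset.sum_le_sum fun v _ => ?_
    nlinarith [ha1 v, ha v, hl1 v, hl0 v]
  | succ n ih =>
    intro a ha ha1
    set h := ∑ x, (1 - l x) with hhdef
    rw [hom_succ s a, hom_succ s (fun x => a x * l x)]
    have e1 : ∑ v, a v * hom s (fun x => a x * s v x) (n+1) ≤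
        ∑ v, a v * l v * hom s (fun x => a x * s v x) (n+1) + h * hom s a (n+1) := by
      rw [hhdef, Finset.sum_mul, ← Finset.sum_add_distrib]
      refine Finset.sum_le_sum fun v _ => ?_
      have h1 : hom s (fun x => a x * s v x) (n+1) ≤ hom s a (n+1) :=
        hom_mono hs0 (fun _ _ => le_rfl) (fun x => mul_nonneg (ha x) (hs0 _ _))
        (fun x => mul_le_of_le_one_right (ha x) (hs1 _ _)) _
      have h2 : 0 ≤ hom s (fun x => a x * s v x) (n+1) :=
        hom_nonneg hs0 (fun x => mul_nonneg (ha x) (hs0 _ _)) _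
      have h3 : a v * (1 - l v) ≤ 1 - l v := mul_le_of_le_one_left (by linarith [hl1 v]) (ha1 v)
      have h4 := mul_le_mul h3 h1 h2 (by linarith [hl1 v])
      nlinarith
    have e2 : ∑ v, a v * l v * hom s (fun x => a x * s v x) (n+1) ≤
        ∑ v, a v * l v * hom s (fun x => a x * l x * s v x) (n+1) + (n+1) * h * hom s a (n+1) := by
      rw [hom_succ s a n, Finset.mul_sum, ← Finset.sum_add_distrib]
      refine Finset.sum_le_sum fun v _ => ?_
      have := ih (fun x => a x * s v x) (fun x => mul_nonneg (ha x) (hs0 _ _))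
        (fun x => mul_le_one₀ (ha1 x) (hs0 _ _) (hs1 _ _))
      have e : (fun x => a x * s v x * l x) = fun x => a x * l x * s v x := by ext x; ring
      simp only [e] at this
      have h1 := mul_le_mul_of_nonneg_left this (mul_nonneg (ha v) (hl0 v))
      have h2 : 0 ≤ hom s (fun x => a x * s v x) n :=
        hom_nonneg hs0 (fun x => mul_nonneg (ha x) (hs0 _ _)) _
      have h3 : a v * l v ≤ a v := mul_le_of_le_one_right (ha v) (hl1 v)
      have h4 := mul_le_mul_of_nonneg_right h3 (mul_nonneg (mul_nonneg (by positivity : (0:ℝ) ≤ n + 1) hh) h2)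
      nlinarith
    push_cast
    nlinarith

noncomputable def C4 (D : V → V → ℝ) : ℝ := ∑ y, ∑ y', (∑ x, D x y * D x y') ^ 2

theorem C4_nonneg (D : V → V → ℝ) : 0 ≤ C4 D :=
  Finset.sum_nonneg fun _ _ => Finset.sum_nonneg fun _ _ => sq_nonneg _

theorem op_bound (D : V → V → ℝ) (α β : V → ℝ) :
    (∑ x, ∑ y, D x y * α x * β y) ^ 4 ≤ (∑ x, α x ^ 2) ^ 2 * (∑ y, β y ^ 2) ^ 2 * C4 D := by
  have h1 : (∑ x, ∑ y, D x y * α x * β y) ^ 2 ≤ (∑ x, α x ^ 2) * ∑ x, (∑ y, D x y * β y) ^ 2 := by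
    have : ∑ x, ∑ y, D x y * α x * β y = ∑ x, α x * ∑ y, D x y * β y := by
      refine Finset.sum_congr rfl fun x _ => ?_
      rw [Finset.mul_sum]
      exact Finset.sum_congr rfl fun y _ => by ring
    rw [this]
    exact Finset.sum_mul_sq_le_sq_mul_sq _ _ _
  have h2 : ∑ x, (∑ y, D x y * β y) ^ 2 =
      ∑ z : V × V, (β z.1 * β z.2) * ∑ x, D x z.1 * D x z.2 := by
    rw [Fintype.sum_prod_type]
    have e : ∀ x, (∑ y, D x y * β y) ^ 2 = ∑ y, ∑ y', (D x y * β y) * (D x y' * β y') := fun x => by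
      rw [sq, Finset.sum_mul_sum]
    simp only [e, Finset.mul_sum]
    rw [Finset.sum_comm]
    refine Finset.sum_congr rfl fun y _ => ?_
    rw [Finset.sum_comm]
    refine Finset.sum_congr rfl fun y' _ => ?_
    exact Finset.sum_congr rfl fun x _ => by ring
  have h3 : (∑ x, (∑ y, D x y * β y) ^ 2) ^ 2 ≤ (∑ y, β y ^ 2) ^ 2 * C4 D := by
    rw [h2]
    refine (Finset.sum_mul_sq_le_sq_mul_sq _ _ _).trans (le_of_eq ?_)
    congr 1
    · rw [Fintype.sum_prod_type, sq, Finset.sum_mul_sum]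
      exact Finset.sum_congr rfl fun x _ => Finset.sum_congr rfl fun y _ => by ring
    · rw [Fintype.sum_prod_type]; rfl
  have h4 : (∑ x, ∑ y, D x y * α x * β y) ^ 4 = ((∑ x, ∑ y, D x y * α x * β y) ^ 2) ^ 2 := by ring
  rw [h4]
  calc _ ≤ ((∑ x, α x ^ 2) * ∑ x, (∑ y, D x y * β y) ^ 2) ^ 2 :=
        pow_le_pow_left₀ (sq_nonneg _) h1 2
    _ = (∑ x, α x ^ 2) ^ 2 * (∑ x, (∑ y, D x y * β y) ^ 2) ^ 2 := by ring
    _ ≤ _ := by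
      rw [mul_assoc]
      exact mul_le_mul_of_nonneg_left h3 (sq_nonneg _)

theorem op_bound' (D : V → V → ℝ) {lam : ℝ} (hlam : 0 < lam) (α β : V → ℝ) (c : ℝ)
    (hα : ∑ x, α x ^ 2 ≤ c) (hβ : ∑ x, β x ^ 2 ≤ c) :
    ∑ x, ∑ y, D x y * α x * β y ≤ (lam + C4 D / lam ^ 3) * c := by
  have hα0 : 0 ≤ ∑ x, α x ^ 2 := Finset.sum_nonneg fun _ _ => sq_nonneg _
  have hβ0 : 0 ≤ ∑ x, β x ^ 2 := Finset.sum_nonneg fun _ _ => sq_nonneg _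
  have hc : 0 ≤ c := hα0.trans hα
  set X := ∑ x, ∑ y, D x y * α x * β y with hX
  have h := op_bound D α β
  rw [← hX] at h
  have h' : X ^ 4 ≤ c ^ 4 * C4 D := by
    refine h.trans (mul_le_mul_of_nonneg_right ?_ (C4_nonneg D))
    calc _ ≤ c ^ 2 * c ^ 2 := mul_le_mul (pow_le_pow_left₀ hα0 hα 2) (pow_le_pow_left₀ hβ0 hβ 2)
            (sq_nonneg _) (sq_nonneg _)
      _ = c ^ 4 := by ring
  by_contra hlt
  push Not at hlt
  have hC := C4_nonneg D
  have hlc : 0 ≤ lam * c := mul_nonneg hlam.le hc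
  have hCc : 0 ≤ C4 D / lam ^ 3 * c := by positivity
  have h1 : lam * c < X := by nlinarith
  have h2 : C4 D / lam ^ 3 * c < X := by nlinarith
  have hXpos : 0 < X := lt_of_le_of_lt hlc h1
  have h3 : (lam * c) ^ 3 ≤ X ^ 3 := pow_le_pow_left₀ hlc h1.le 3
  rcases hc.eq_or_lt with h0 | h0
  · rw [← h0] at h'
    have : 0 < X ^ 4 := by positivity
    simp at h'
    linarith
  · have h4 : (C4 D / lam ^ 3 * c) * (lam * c) ^ 3 < X * X ^ 3 :=
      mul_lt_mul h2 h3 (by positivity) hXpos.le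
    have h5 : (C4 D / lam ^ 3 * c) * (lam * c) ^ 3 = c ^ 4 * C4 D := by
      field_simp
    nlinarith
end Det
section Prob

theorem sum_weight_prod (p : ℝ) {N : ℕ} (φ : Fin N → Bool → ℝ) :
    ∑ x : Fin N → Bool, weight p x * ∏ i, φ i (x i) = ∏ i, (p * φ i true + (1 - p) * φ i false) := by
  have h : ∀ i, p * φ i true + (1 - p) * φ i false =
      ∑ b : Bool, (if b then p else 1 - p) * φ i b := fun i => by simp
  simp only [h]
  rw [Finset.prod_univ_sum]
  simp only [Fintype.piFinset_univ, weight, Finset.prod_mul_distrib]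

theorem sum_weight (p : ℝ) (N : ℕ) : ∑ x : Fin N → Bool, weight p x = 1 := by
  have := sum_weight_prod p (N := N) (fun _ _ => 1)
  simpa using this

theorem weight_nonneg {p : ℝ} (h0 : 0 ≤ p) (h1 : p ≤ 1) {N : ℕ} (x : Fin N → Bool) :
    0 ≤ weight p x :=
  Finset.prod_nonneg fun i _ => by split_ifs <;> linarith

noncomputable def bb (b : Bool) : ℝ := if b then 1 else 0

theorem bb_nonneg (b : Bool) : 0 ≤ bb b := by cases b <;> simp [bb]
theorem bb_le (b : Bool) : bb b ≤ 1 := by cases b <;> simp [bb]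

theorem sum_weight_bb (p : ℝ) {N : ℕ} (T : Finset (Fin N)) :
    ∑ x : Fin N → Bool, weight p x * ∏ i ∈ T, bb (x i) = p ^ T.card := by
  have h : ∀ x : Fin N → Bool, ∏ i ∈ T, bb (x i) = ∏ i, (if i ∈ T then bb (x i) else 1) := by
    intro x; simp
  simp only [h]
  rw [sum_weight_prod p (fun i b => if i ∈ T then bb b else 1)]
  rw [← Finset.prod_const, ← Finset.prod_subset (Finset.subset_univ T)]
  · refine Finset.prod_congr rfl fun i hi => by simp [hi, bb]
  · intro i _ hi; simp [hi]

theorem mart (p : ℝ) {N : ℕ} (t : Fin N) (F : (Fin N → Bool) → ℝ)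
    (hF : ∀ x b, F (Function.update x t b) = F x) :
    ∑ x : Fin N → Bool, weight p x * (F x * (bb (x t) - p)) = 0 := by
  have hinv : Function.Involutive (fun x : Fin N → Bool => Function.update x t (!x t)) := by
    intro x; simp
  let P : Equiv.Perm (Fin N → Bool) := Function.Involutive.toPerm _ hinv
  have h1 := Equiv.sum_comp P (fun x : Fin N → Bool => weight p x * (F x * (bb (x t) - p)))
  have h2 : ∀ x : Fin N → Bool, weight p (P x) * (F (P x) *
      (bb ((P x) t) - p)) = - (weight p x * (F x * (bb (x t) - p))) := by
    intro x
    have e : P x = Function.update x t (!x t) := rfl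
    rw [e, hF]
    have hw : ∀ z : Fin N → Bool, weight p z = (if z t then p else 1 - p) *
        ∏ i ∈ Finset.univ.erase t, (if z i then p else 1 - p) := fun z => by
      exact (Finset.mul_prod_erase Finset.univ (fun i => if z i then p else 1 - p) (Finset.mem_univ t)).symm
    rw [hw x, hw (Function.update x t (!x t))]
    have : ∏ i ∈ Finset.univ.erase t, (if (Function.update x t (!x t)) i then p else 1 - p) =
        ∏ i ∈ Finset.univ.erase t, (if x i then p else 1 - p) := by
      refine Finset.prod_congr rfl fun i hi => ?_
      rw [Function.update_of_ne (Finset.ne_of_mem_erase hi)]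
    rw [this]
    simp only [Function.update_self]
    cases x t <;> simp [bb] <;> ring
  simp only [h2, Finset.sum_neg_distrib] at h1
  linarith

variable {N : ℕ} (q : (Fin N → Bool) → Fin N → Sym2 ℕ)

noncomputable def deg (x : Fin N → Bool) (t : ℕ) (v : ℕ) : ℕ :=
  (Finset.univ.filter fun t' : Fin N => t'.val < t ∧ v ∈ q x t').card

def light (L : ℕ) (x : Fin N → Bool) (t : Fin N) : Prop := ∀ v ∈ q x t, deg q x t v < L

noncomputable def ww (L : ℕ) (x : Fin N → Bool) (t : Fin N) (e : Sym2 ℕ) : ℝ :=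
  if q x t = e ∧ light q L x t then 1 else 0

noncomputable def gg (L : ℕ) (x : Fin N → Bool) (e : Sym2 ℕ) : ℝ := ∑ t, ww q L x t e
noncomputable def ss (L : ℕ) (x : Fin N → Bool) (e : Sym2 ℕ) : ℝ := ∑ t, ww q L x t e * bb (x t)
noncomputable def dd (p : ℝ) (L : ℕ) (x : Fin N → Bool) (e : Sym2 ℕ) : ℝ :=
  ∑ t, ww q L x t e * (bb (x t) - p)

theorem ww_nonneg (L : ℕ) (x : Fin N → Bool) (t : Fin N) (e : Sym2 ℕ) : 0 ≤ ww q L x t e := by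
  unfold ww; split_ifs <;> simp

theorem dd_eq (p : ℝ) (L : ℕ) (x : Fin N → Bool) (e : Sym2 ℕ) :
    dd q p L x e = ss q L x e - p * gg q L x e := by
  simp only [dd, ss, gg, Finset.mul_sum, ← Finset.sum_sub_distrib]
  exact Finset.sum_congr rfl fun t _ => by ring

theorem ss_nonneg (L : ℕ) (x : Fin N → Bool) (e : Sym2 ℕ) : 0 ≤ ss q L x e :=
  Finset.sum_nonneg fun t _ => mul_nonneg (ww_nonneg q L x t e) (bb_nonneg _)

theorem gg_nonneg (L : ℕ) (x : Fin N → Bool) (e : Sym2 ℕ) : 0 ≤ gg q L x e :=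
  Finset.sum_nonneg fun t _ => ww_nonneg q L x t e

theorem ss_le (L : ℕ) (x : Fin N → Bool) (e : Sym2 ℕ) : ss q L x e ≤ gg q L x e :=
  Finset.sum_le_sum fun t _ => mul_le_of_le_one_right (ww_nonneg q L x t e) (bb_le _)

theorem abs_dd_le {p : ℝ} (h0 : 0 ≤ p) (h1 : p ≤ 1) (L : ℕ) (x : Fin N → Bool) (e : Sym2 ℕ) :
    |dd q p L x e| ≤ gg q L x e := by
  refine (Finset.abs_sum_le_sum_abs _ _).trans (Finset.sum_le_sum fun t _ => ?_)
  rw [abs_mul, abs_of_nonneg (ww_nonneg q L x t e)]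
  refine mul_le_of_le_one_right (ww_nonneg q L x t e) ?_
  have := bb_nonneg (x t); have := bb_le (x t)
  rw [abs_le]; constructor <;> linarith

theorem gg_le_one (hinj : ∀ x, Function.Injective (q x)) (L : ℕ) (x : Fin N → Bool) (e : Sym2 ℕ) :
    gg q L x e ≤ 1 := by
  unfold gg ww
  rw [Finset.sum_boole]
  norm_cast
  rw [Finset.card_le_one]
  intro a ha b hb
  simp only [Finset.mem_filter, Finset.mem_univ, true_and] at ha hb
  exact hinj x (ha.1.trans hb.1.symm)

theorem row_le {M : ℕ} (z : Sym2 ℕ) (v : ℕ) :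
    ∑ u : Fin M, (if z = s((u : ℕ), v) then (1 : ℝ) else 0) ≤ if v ∈ z then 1 else 0 := by
  rw [Finset.sum_boole]
  split_ifs with h
  · norm_cast
    rw [Finset.card_le_one]
    intro a ha b hb
    simp only [Finset.mem_filter, Finset.mem_univ, true_and] at ha hb
    have := ha.symm.trans hb
    rw [Sym2.congr_left] at this
    exact Fin.ext this
  · norm_cast
    rw [Nat.le_zero, Finset.card_eq_zero, Finset.filter_eq_empty_iff]
    intro u _ hu
    exact h (hu ▸ Sym2.mem_mk_right _ _)

theorem mem_le {M : ℕ} (z : Sym2 ℕ) :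
    ∑ u : Fin M, (if (u : ℕ) ∈ z then (1 : ℝ) else 0) ≤ 2 := by
  induction z using Sym2.ind with
  | _ a b =>
  rw [Finset.sum_boole]
  norm_cast
  have : (Finset.univ.filter fun u : Fin M => (u : ℕ) ∈ s(a, b)).card ≤ ({a, b} : Finset ℕ).card := by
    refine Finset.card_le_card_of_injOn (fun u => (u : ℕ)) ?_ (fun a _ b _ h => Fin.ext h)
    intro u hu
    simpa using hu
  exact this.trans Finset.card_le_two

theorem gg_row {M : ℕ} (L : ℕ) (x : Fin N → Bool) (v : ℕ) :
    ∑ u : Fin M, gg q L x s((u : ℕ), v) ≤ L := by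
  unfold gg
  rw [Finset.sum_comm]
  have h1 : ∀ t, ∑ u : Fin M, ww q L x t s((u : ℕ), v) ≤
      if v ∈ q x t ∧ deg q x t v < L then 1 else 0 := by
    intro t
    by_cases h : v ∈ q x t ∧ deg q x t v < L
    · rw [if_pos h]
      refine le_trans (Finset.sum_le_sum fun u _ => ?_) ((row_le (M := M) (q x t) v).trans ?_)
      · unfold ww
        split_ifs with h1 h2
        · exact le_rfl
        · exact absurd h1.1 h2
        · exact zero_le_one
        · exact le_rfl
      · split_ifs <;> simp
    · rw [if_neg h]
      refine le_of_eq (Finset.sum_eq_zero fun u _ => ?_)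
      unfold ww
      rw [if_neg]
      rintro ⟨h1, h2⟩
      have : v ∈ q x t := h1 ▸ Sym2.mem_mk_right _ _
      exact h ⟨this, h2 v this⟩
  refine (Finset.sum_le_sum fun t _ => h1 t).trans ?_
  rw [Finset.sum_boole]
  norm_cast
  set A := Finset.univ.filter fun t : Fin N => v ∈ q x t ∧ deg q x t v < L with hA
  rcases A.eq_empty_or_nonempty with h | h
  · simp [h]
  · have hm := A.max'_mem h
    set t := A.max' h with ht
    have hm' := hm
    rw [hA, Finset.mem_filter] at hm'
    have : (A.erase t).card ≤ deg q x t v := by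
      refine Finset.card_le_card fun t' ht' => ?_
      have h2 := Finset.mem_of_mem_erase ht'
      have h3 : t' < t := Finset.lt_max'_of_mem_erase_max' A h ht'
      rw [hA, Finset.mem_filter] at h2
      simp only [Finset.mem_filter, Finset.mem_univ, true_and]
      exact ⟨h3, h2.2.1⟩
    rw [Finset.card_erase_of_mem hm] at this
    have := hm'.2.2
    omega

theorem gg_total {M : ℕ} (L : ℕ) (x : Fin N → Bool) :
    ∑ v : Fin M, ∑ u : Fin M, gg q L x s((u : ℕ), (v : ℕ)) ≤ 2 * N := by
  calc ∑ v : Fin M, ∑ u : Fin M, gg q L x s((u : ℕ), (v : ℕ))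
      ≤ ∑ v : Fin M, ∑ t : Fin N, (if (v : ℕ) ∈ q x t then (1 : ℝ) else 0) := by
        refine Finset.sum_le_sum fun v _ => ?_
        unfold gg
        rw [Finset.sum_comm]
        refine Finset.sum_le_sum fun t _ => le_trans (Finset.sum_le_sum fun u _ => ?_) (row_le (M := M) (q x t) v)
        unfold ww
        split_ifs with h1 h2
        · exact le_rfl
        · exact absurd h1.1 h2
        · exact zero_le_one
        · exact le_rfl
    _ ≤ ∑ t : Fin N, (2 : ℝ) := by
        rw [Finset.sum_comm]
        exact Finset.sum_le_sum fun t _ => mem_le _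
    _ = 2 * N := by simp [mul_comm]

theorem heavy_count {M : ℕ} (L : ℕ) (x : Fin N → Bool) :
    L * ∑ v : Fin M, (1 - (if deg q x N v < L then (1 : ℝ) else 0)) ≤ 2 * N := by
  calc L * ∑ v : Fin M, (1 - (if deg q x N v < L then (1 : ℝ) else 0))
      ≤ ∑ v : Fin M, ∑ t : Fin N, (if (v : ℕ) ∈ q x t then (1 : ℝ) else 0) := by
        rw [Finset.mul_sum]
        refine Finset.sum_le_sum fun v _ => ?_
        have : ∑ t : Fin N, (if (v : ℕ) ∈ q x t then (1 : ℝ) else 0) = deg q x N v := by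
          rw [Finset.sum_boole]; simp [deg]
        rw [this]
        split_ifs with h
        · simp
        · push Not at h
          simpa using h
    _ ≤ ∑ t : Fin N, (2 : ℝ) := by
        rw [Finset.sum_comm]
        exact Finset.sum_le_sum fun t _ => mem_le _
    _ = 2 * N := by simp [mul_comm]

theorem light_agree (L : ℕ) (x : Fin N → Bool) (u v : ℕ) (hu : deg q x N u < L) (hv : deg q x N v < L)
    (L' : ℕ) : ss q L' x s(u, v) ≤ ss q L x s(u, v) := by
  refine Finset.sum_le_sum fun t _ => mul_le_mul_of_nonneg_right ?_ (bb_nonneg _)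
  unfold ww
  by_cases h : q x t = s(u, v)
  · have : light q L x t := by
      intro w hw
      rw [h, Sym2.mem_iff] at hw
      have hmono : deg q x t w ≤ deg q x N w := by
        refine Finset.card_le_card fun t' ht' => ?_
        simp only [Finset.mem_filter, Finset.mem_univ, true_and] at ht' ⊢
        exact ⟨t'.2, ht'.2⟩
      rcases hw with rfl | rfl
      · exact lt_of_le_of_lt hmono hu
      · exact lt_of_le_of_lt hmono hv
    rw [if_pos (⟨h, this⟩ : q x t = s(u, v) ∧ light q L x t)]
    split_ifs <;> simp
  · simp [h]

variable {q}

theorem ww_update (hq : ∀ x t b (t' : Fin N), t' ≤ t → q (Function.update x t b) t' = q x t')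
    (L : ℕ) (x : Fin N → Bool) (t : Fin N) (b : Bool) (t' : Fin N) (h : t' ≤ t) (e : Sym2 ℕ) :
    ww q L (Function.update x t b) t' e = ww q L x t' e := by
  have h1 := hq x t b t' h
  have h2 : ∀ v, deg q (Function.update x t b) t' v = deg q x t' v := by
    intro v
    unfold deg
    congr 1
    ext t''
    simp only [Finset.mem_filter, Finset.mem_univ, true_and]
    refine and_congr_right fun hlt => ?_
    rw [hq x t b t'' ((Fin.le_of_lt hlt).trans h)]
  unfold ww light
  simp only [h1, h2]

theorem prod_dd (hq : ∀ x t b (t' : Fin N), t' ≤ t → q (Function.update x t b) t' = q x t')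
    (p : ℝ) (L : ℕ) {k : ℕ} (e : Fin (k+1) → Sym2 ℕ) (he : Function.Injective e) :
    ∑ x : Fin N → Bool, weight p x * ∏ i, dd q p L x (e i) = 0 := by
  simp only [dd, Finset.prod_univ_sum, Finset.mul_sum]
  rw [Finset.sum_comm]
  refine Finset.sum_eq_zero fun τ _ => ?_
  by_cases hτ : Function.Injective τ
  · obtain ⟨i0, -, hi0⟩ := Finset.exists_max_image (Finset.univ : Finset (Fin (k+1))) τ
      Finset.univ_nonempty
    have := mart p (τ i0) (fun x => ww q L x (τ i0) (e i0) *
      ∏ i ∈ Finset.univ.erase i0, (ww q L x (τ i) (e i) * (bb (x (τ i)) - p))) (by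
        intro x b
        rw [ww_update hq L x _ b _ le_rfl]
        congr 1
        refine Finset.prod_congr rfl fun i hi => ?_
        rw [ww_update hq L x _ b _ (hi0 i (Finset.mem_univ i)), Function.update_of_ne]
        exact fun h => Finset.ne_of_mem_erase hi (hτ h))
    rw [← this]
    refine Finset.sum_congr rfl fun x _ => ?_
    rw [← Finset.mul_prod_erase _ _ (Finset.mem_univ i0)]
    ring
  · refine Finset.sum_eq_zero fun x _ => ?_
    unfold Function.Injective at hτ
    push Not at hτ
    obtain ⟨i, j, hij, hne⟩ := hτ
    by_cases h : ww q L x (τ i) (e i) = 0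
    · rw [Finset.prod_eq_zero (Finset.mem_univ i) (by rw [h, zero_mul]), mul_zero]
    · by_cases h' : ww q L x (τ j) (e j) = 0
      · rw [Finset.prod_eq_zero (Finset.mem_univ j) (by rw [h', zero_mul]), mul_zero]
      · exfalso
        unfold ww at h h'
        simp only [ite_eq_right_iff, not_forall] at h h'
        obtain ⟨h, -⟩ := h
        obtain ⟨h', -⟩ := h'
        exact hne (he (by rw [← h.1, ← h'.1, hij]))

theorem dd_diag (hdiag : ∀ x t, ¬ (q x t).IsDiag) (p : ℝ) (L : ℕ) (x : Fin N → Bool) (u : ℕ) :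
    dd q p L x s(u, u) = 0 := by
  refine Finset.sum_eq_zero fun t _ => ?_
  unfold ww
  rw [if_neg, zero_mul]
  rintro ⟨h, -⟩
  exact hdiag x t (by rw [h]; simp)

theorem term_zero (hq : ∀ x t b (t' : Fin N), t' ≤ t → q (Function.update x t b) t' = q x t')
    (hdiag : ∀ x t, ¬ (q x t).IsDiag) (p : ℝ) (L : ℕ) (u u' y y' : ℕ) (hu : u ≠ u') (hy : y ≠ y') :
    ∑ x : Fin N → Bool, weight p x * (dd q p L x s(u, y) * dd q p L x s(u, y') *
      (dd q p L x s(u', y) * dd q p L x s(u', y'))) = 0 := by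
  by_cases h1 : u = y
  · subst h1; simp [dd_diag hdiag]
  by_cases h2 : u = y'
  · subst h2; simp [dd_diag hdiag]
  by_cases h3 : u' = y
  · subst h3; simp [dd_diag hdiag]
  by_cases h4 : u' = y'
  · subst h4; simp [dd_diag hdiag]
  have := prod_dd hq p L ![s(u, y), s(u, y'), s(u', y), s(u', y')] (by
    intro i j hij
    fin_cases i <;> fin_cases j <;> simp at hij ⊢ <;> omega)
  rw [← this]
  refine Finset.sum_congr rfl fun x _ => ?_
  simp [Fin.prod_univ_succ]
  ring_nf
  tauto

theorem aux_sq {a b A B : ℝ} (ha : |a| ≤ A) (hb : |b| ≤ B) (hA : A ≤ 1) (hB : B ≤ 1) :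
    a * a * (b * b) ≤ A * B := by
  have h1 : a * a ≤ A := by
    rw [← abs_mul_abs_self]
    nlinarith [abs_nonneg a]
  have h2 : b * b ≤ B := by
    rw [← abs_mul_abs_self]
    nlinarith [abs_nonneg b]
  exact mul_le_mul h1 h2 (mul_self_nonneg b) ((abs_nonneg a).trans ha)

theorem C4_expect (hq : ∀ x t b (t' : Fin N), t' ≤ t → q (Function.update x t b) t' = q x t')
    (hdiag : ∀ x t, ¬ (q x t).IsDiag) (hinj : ∀ x, Function.Injective (q x))
    {p : ℝ} (h0 : 0 ≤ p) (h1 : p ≤ 1) (L M : ℕ) :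
    ∑ x : Fin N → Bool, weight p x * C4 (fun u v : Fin M => dd q p L x s((u : ℕ), (v : ℕ))) ≤
      4 * N * L := by
  set T : (Fin N → Bool) → Fin M → Fin M → Fin M → Fin M → ℝ := fun x y y' u u' =>
    dd q p L x s((u : ℕ), (y : ℕ)) * dd q p L x s((u : ℕ), (y' : ℕ)) *
      (dd q p L x s((u' : ℕ), (y : ℕ)) * dd q p L x s((u' : ℕ), (y' : ℕ))) with hT
  have e1 : ∀ x, C4 (fun u v : Fin M => dd q p L x s((u : ℕ), (v : ℕ))) =
      ∑ y, ∑ y', ∑ u, ∑ u', T x y y' u u' := by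
    intro x
    simp only [C4, sq, Finset.sum_mul_sum, hT]
  have e2 : ∀ x y y' u u', T x y y' u u' ≤ (if u ≠ u' ∧ y ≠ y' then T x y y' u u' else 0) +
      ((if y = y' then gg q L x s((u : ℕ), (y : ℕ)) * gg q L x s((u' : ℕ), (y : ℕ)) else 0) +
       (if u = u' then gg q L x s((y : ℕ), (u : ℕ)) * gg q L x s((y' : ℕ), (u : ℕ)) else 0)) := by
    intro x y y' u u'
    by_cases hu : u = u'
    · subst hu
      have hn : (0 : ℝ) ≤ (if y = y' then gg q L x s((u : ℕ), (y : ℕ)) * gg q L x s((u : ℕ), (y : ℕ)) else 0) := by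
        split_ifs
        · exact mul_nonneg (gg_nonneg ..) (gg_nonneg ..)
        · exact le_rfl
      have := aux_sq (abs_dd_le q h0 h1 L x s((u : ℕ), (y : ℕ))) (abs_dd_le q h0 h1 L x s((u : ℕ), (y' : ℕ)))
        (gg_le_one q hinj _ _ _) (gg_le_one q hinj _ _ _)
      simp only [ne_eq, not_true_eq_false, false_and, if_false, if_true, zero_add]
      rw [Sym2.eq_swap (a := (y : ℕ)), Sym2.eq_swap (a := (y' : ℕ))]
      simp only [hT]
      nlinarith
    · by_cases hy : y = y'
      · subst hy
        have := aux_sq (abs_dd_le q h0 h1 L x s((u : ℕ), (y : ℕ))) (abs_dd_le q h0 h1 L x s((u' : ℕ), (y : ℕ)))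
          (gg_le_one q hinj _ _ _) (gg_le_one q hinj _ _ _)
        simp only [ne_eq, not_true_eq_false, and_false, if_false, if_true, zero_add, hu, add_zero]
        exact this
      · simp [hu, hy]
  have e3 : ∀ x, ∑ y : Fin M, ∑ y' : Fin M, ∑ u : Fin M, ∑ u' : Fin M,
      (if y = y' then gg q L x s((u : ℕ), (y : ℕ)) * gg q L x s((u' : ℕ), (y : ℕ)) else 0) ≤ L * (2 * N) := by
    intro x
    calc _ = ∑ y : Fin M, (∑ u : Fin M, gg q L x s((u : ℕ), (y : ℕ))) * (∑ u : Fin M, gg q L x s((u : ℕ), (y : ℕ))) := by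
          refine Finset.sum_congr rfl fun y _ => ?_
          rw [Finset.sum_eq_single y]
          · simp only [if_true, Finset.sum_mul_sum]
          · intro b _ hb
            simp [hb.symm]
          · simp
      _ ≤ ∑ y : Fin M, L * (∑ u : Fin M, gg q L x s((u : ℕ), (y : ℕ))) :=
          Finset.sum_le_sum fun y _ => mul_le_mul_of_nonneg_right (gg_row q L x y)
            (Finset.sum_nonneg fun u _ => gg_nonneg ..)
      _ ≤ _ := by
          rw [← Finset.mul_sum]
          exact mul_le_mul_of_nonneg_left (gg_total q L x) (Nat.cast_nonneg _)
  have e4 : ∀ x, ∑ y : Fin M, ∑ y' : Fin M, ∑ u : Fin M, ∑ u' : Fin M,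
      (if u = u' then gg q L x s((y : ℕ), (u : ℕ)) * gg q L x s((y' : ℕ), (u : ℕ)) else 0) ≤ L * (2 * N) := by
    intro x
    refine le_trans (le_of_eq ?_) (e3 x)
    have : ∀ F : Fin M → Fin M → Fin M → Fin M → ℝ, ∑ y, ∑ y', ∑ u, ∑ u', F y y' u u' =
        ∑ u, ∑ u', ∑ y, ∑ y', F y y' u u' := by
      intro F
      calc _ = ∑ z : Fin M × Fin M, ∑ w : Fin M × Fin M, F z.1 z.2 w.1 w.2 := by
            simp only [Fintype.sum_prod_type]
        _ = ∑ w : Fin M × Fin M, ∑ z : Fin M × Fin M, F z.1 z.2 w.1 w.2 := Finset.sum_comm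
        _ = _ := by simp only [Fintype.sum_prod_type]
    rw [this]
  have e5 : ∑ x : Fin N → Bool, weight p x * ∑ y, ∑ y', ∑ u, ∑ u',
      (if u ≠ u' ∧ y ≠ y' then T x y y' u u' else 0) = 0 := by
    simp only [Finset.mul_sum]
    rw [Finset.sum_comm]
    refine Finset.sum_eq_zero fun y _ => ?_
    rw [Finset.sum_comm]
    refine Finset.sum_eq_zero fun y' _ => ?_
    rw [Finset.sum_comm]
    refine Finset.sum_eq_zero fun u _ => ?_
    rw [Finset.sum_comm]
    refine Finset.sum_eq_zero fun u' _ => ?_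
    by_cases h : u ≠ u' ∧ y ≠ y'
    · simp only [if_pos h]
      exact term_zero hq hdiag p L u u' y y' (fun hh => h.1 (Fin.ext hh)) (fun hh => h.2 (Fin.ext hh))
    · simp only [if_neg h, mul_zero, Finset.sum_const_zero]
  calc _ ≤ ∑ x : Fin N → Bool, (weight p x * ∑ y, ∑ y', ∑ u, ∑ u',
      (if u ≠ u' ∧ y ≠ y' then T x y y' u u' else 0) + weight p x * (4 * N * L)) := by
        refine Finset.sum_le_sum fun x _ => ?_
        rw [← mul_add]
        refine mul_le_mul_of_nonneg_left ?_ (weight_nonneg h0 h1 x)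
        rw [e1]
        have := e3 x
        have := e4 x
        have h : ∑ y, ∑ y', ∑ u, ∑ u', T x y y' u u' ≤ ∑ y, ∑ y', ∑ u, ∑ u', _ :=
          Finset.sum_le_sum fun y _ => Finset.sum_le_sum fun y' _ => Finset.sum_le_sum fun u _ =>
            Finset.sum_le_sum fun u' _ => e2 x y y' u u'
        simp only [Finset.sum_add_distrib] at h
        linarith
    _ = _ := by
        rw [Finset.sum_add_distrib, e5, ← Finset.sum_mul, sum_weight]
        ring

/-- Main expected upper bound. -/
theorem hom_expect (hq : ∀ x t b (t' : Fin N), t' ≤ t → q (Function.update x t b) t' = q x t')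
    (hdiag : ∀ x t, ¬ (q x t).IsDiag) (hinj : ∀ x, Function.Injective (q x))
    {p : ℝ} (h0 : 0 ≤ p) (h1 : p ≤ 1) (L M : ℕ) (hL : 0 < L) {lam : ℝ} (hlam : 0 < lam) (n : ℕ) :
    ∑ x : Fin N → Bool, weight p x *
      hom (fun u v : Fin M => ss q (N+1) x s((u : ℕ), (v : ℕ))) (fun _ => 1) (n+3) ≤
      p ^ ((n+3).choose 2) * √(2 * N) ^ (n+3) +
      (((n+3).choose 2) * (lam + 4 * N * L / lam ^ 3) + (n+3) * (2 * N / L)) * √(2 * N) ^ (n+2) := by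
  set R := √(2 * (N:ℝ)) with hR
  set k := (n+3).choose 2 with hk
  have hR0 : 0 ≤ R := Real.sqrt_nonneg _
  have hkk : ∀ x L' j, hom (fun u v : Fin M => gg q L' x s((u : ℕ), (v : ℕ))) (fun _ => 1) (j+2) ≤
      R ^ (j+2) := by
    intro x L' j
    refine (hom_kk (fun u v => gg_nonneg ..) (fun u v => gg_le_one q hinj ..) j (fun _ => 1)
      (fun _ => zero_le_one) (fun _ => le_rfl)).trans ?_
    refine pow_le_pow_left₀ (Real.sqrt_nonneg _) (Real.sqrt_le_sqrt ?_) _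
    simp only [one_mul]
    rw [Finset.sum_comm]
    exact gg_total q L' x
  have key : ∀ x : Fin N → Bool,
      hom (fun u v : Fin M => ss q (N+1) x s((u : ℕ), (v : ℕ))) (fun _ => 1) (n+3) ≤
      p ^ k * R ^ (n+3) + (k * (lam + C4 (fun u v : Fin M => dd q p L x s((u : ℕ), (v : ℕ))) / lam ^ 3)
        + (n+3) * (2 * N / L)) * R ^ (n+2) := by
    intro x
    set l : Fin M → ℝ := fun v => if deg q x N v < L then 1 else 0 with hl
    have hl0 : ∀ v, 0 ≤ l v := fun v => by simp only [hl]; split_ifs <;> simp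
    have hl1 : ∀ v, l v ≤ 1 := fun v => by simp only [hl]; split_ifs <;> simp
    have a1 := heavy_bound (s := fun u v : Fin M => ss q (N+1) x s((u : ℕ), (v : ℕ))) (l := l)
      (fun u v => ss_nonneg ..) (fun u v => (ss_le ..).trans (gg_le_one q hinj ..)) hl0 hl1 (n+2)
      (fun _ => 1) (fun _ => zero_le_one) (fun _ => le_rfl)
    have a2 : hom (fun u v : Fin M => ss q (N+1) x s((u : ℕ), (v : ℕ))) (fun _ => 1) (n+2) ≤ R ^ (n+2) :=
      (hom_mono (fun u v => ss_nonneg ..) (fun u v => ss_le ..) (fun _ => zero_le_one)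
        (fun _ => le_rfl) _).trans (hkk x (N+1) n)
    have a3 : ∑ v, (1 - l v) ≤ 2 * N / L := by
      rw [le_div_iff₀ (by exact_mod_cast hL), mul_comm]
      exact heavy_count q L x
    have a4 : hom (fun u v : Fin M => ss q (N+1) x s((u : ℕ), (v : ℕ))) (fun v => 1 * l v) (n+3) ≤
        hom (fun u v : Fin M => ss q L x s((u : ℕ), (v : ℕ))) (fun _ => 1) (n+3) := by
      refine Finset.sum_le_sum fun f _ => ?_
      by_cases hf : ∀ i, deg q x N (f i) < L
      · simp only [hl, hf, if_true, one_mul, Finset.prod_const_one]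
        refine Finset.prod_le_prod (fun i _ => Finset.prod_nonneg fun j _ => ?_)
          fun i _ => Finset.prod_le_prod (fun j _ => ?_) fun j _ => ?_
        · split_ifs
          · exact ss_nonneg ..
          · exact zero_le_one
        · split_ifs
          · exact ss_nonneg ..
          · exact zero_le_one
        · split_ifs
          · exact light_agree q L x _ _ (hf i) (hf j) _
          · exact le_rfl
      · push Not at hf
        obtain ⟨i, hi⟩ := hf
        rw [Finset.prod_eq_zero (Finset.mem_univ i) (by simp [hl, hi]), zero_mul]
        simp only [Finset.prod_const_one, one_mul]
        exact KW_nonneg (fun u v => ss_nonneg ..) f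
    set θ := lam + C4 (fun u v : Fin M => dd q p L x s((u : ℕ), (v : ℕ))) / lam ^ 3 with hθ
    have hθ0 : 0 ≤ θ := by
      have := C4_nonneg (fun u v : Fin M => dd q p L x s((u : ℕ), (v : ℕ)))
      positivity
    have a5 := count_bound (s := fun u v : Fin M => ss q L x s((u : ℕ), (v : ℕ)))
      (g := fun u v : Fin M => gg q L x s((u : ℕ), (v : ℕ))) h0 h1 hθ0
      (fun u v => ss_nonneg ..) (fun u v => ss_le ..) (fun u v => gg_le_one q hinj ..)
      (fun u v => by rw [Sym2.eq_swap]) (by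
        intro α β c hα hβ
        have := op_bound' (fun u v : Fin M => dd q p L x s((u : ℕ), (v : ℕ))) hlam α β c hα hβ
        simp only [← dd_eq]
        exact this) (n+2) (fun _ => 1) (fun _ => zero_le_one) (fun _ => le_rfl)
    have b1 := mul_le_mul_of_nonneg_left (hkk x L (n+1)) (pow_nonneg h0 k)
    have b2 := mul_le_mul_of_nonneg_left (hkk x L n) (mul_nonneg (Nat.cast_nonneg k) hθ0)
    have b3 : ((n+2 : ℕ) + 1 : ℝ) * (∑ v, (1 - l v)) *
        hom (fun u v : Fin M => ss q (N+1) x s((u : ℕ), (v : ℕ))) (fun _ => 1) (n+2) ≤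
        ((n+2 : ℕ) + 1 : ℝ) * (2 * N / L) * R ^ (n+2) := by
      refine mul_le_mul (mul_le_mul_of_nonneg_left a3 (by positivity)) a2
        (hom_nonneg (fun u v => ss_nonneg ..) (fun _ => zero_le_one) _) (by positivity)
    have c1 : n + 2 + 1 = n + 3 := rfl
    have c2 : n + 1 + 2 = n + 3 := rfl
    rw [c1] at a1 a5
    rw [c2] at b1
    push_cast at b3 a1 a5
    rw [← hk] at a5
    linarith
  calc _ ≤ ∑ x : Fin N → Bool, weight p x * _ :=
        Finset.sum_le_sum fun x _ => mul_le_mul_of_nonneg_left (key x) (weight_nonneg h0 h1 x)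
    _ = (∑ x : Fin N → Bool, weight p x) * (p ^ k * R ^ (n+3) + (k * lam + (n+3) * (2 * N / L)) * R ^ (n+2))
        + (k / lam ^ 3 * R ^ (n+2)) * ∑ x : Fin N → Bool, weight p x *
          C4 (fun u v : Fin M => dd q p L x s((u : ℕ), (v : ℕ))) := by
        rw [Finset.sum_mul, Finset.mul_sum, ← Finset.sum_add_distrib]
        refine Finset.sum_congr rfl fun x _ => ?_
        ring
    _ ≤ 1 * (p ^ k * R ^ (n+3) + (k * lam + (n+3) * (2 * N / L)) * R ^ (n+2))
        + (k / lam ^ 3 * R ^ (n+2)) * (4 * N * L) := by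
        rw [sum_weight]
        have := C4_expect hq hdiag hinj h0 h1 L M
        gcongr
    _ = _ := by ring

theorem hom_expect_two (hinj : ∀ x, Function.Injective (q x))
    {p : ℝ} (h0 : 0 ≤ p) (h1 : p ≤ 1) (M : ℕ) :
    ∑ x : Fin N → Bool, weight p x *
      hom (fun u v : Fin M => ss q (N+1) x s((u : ℕ), (v : ℕ))) (fun _ => 1) 2 ≤ p * (2 * N) := by
  have key : ∀ x, hom (fun u v : Fin M => ss q (N+1) x s((u : ℕ), (v : ℕ))) (fun _ => 1) 2 ≤
      ∑ t, 2 * bb (x t) := by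
    intro x
    rw [hom_succ]
    simp only [hom_one, one_mul, ss]
    have : ∑ u : Fin M, ∑ v : Fin M, ∑ t, ww q (N+1) x t s((u : ℕ), (v : ℕ)) * bb (x t) =
        ∑ t, (∑ v : Fin M, ∑ u : Fin M, ww q (N+1) x t s((u : ℕ), (v : ℕ))) * bb (x t) := by
      simp only [Finset.sum_mul]
      rw [Finset.sum_comm, Finset.sum_comm (s := (Finset.univ : Finset (Fin N)))]
      refine Finset.sum_congr rfl fun v _ => ?_
      rw [Finset.sum_comm]
    rw [this]
    refine Finset.sum_le_sum fun t _ => mul_le_mul_of_nonneg_right ?_ (bb_nonneg _)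
    refine le_trans (Finset.sum_le_sum fun v _ => le_trans (Finset.sum_le_sum fun u _ => ?_)
      (row_le (M := M) (q x t) v)) (mem_le _)
    unfold ww
    split_ifs with h1 h2
    · exact le_rfl
    · exact absurd h1.1 h2
    · exact zero_le_one
    · exact le_rfl
  calc _ ≤ ∑ x : Fin N → Bool, weight p x * ∑ t, 2 * bb (x t) :=
        Finset.sum_le_sum fun x _ => mul_le_mul_of_nonneg_left (key x) (weight_nonneg h0 h1 x)
    _ = ∑ t : Fin N, 2 * ∑ x : Fin N → Bool, weight p x * ∏ i ∈ {t}, bb (x i) := by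
        simp only [Finset.mul_sum, Finset.prod_singleton]
        rw [Finset.sum_comm]
        exact Finset.sum_congr rfl fun t _ => Finset.sum_congr rfl fun x _ => by ring
    _ = p * (2 * N) := by
        simp only [sum_weight_bb]
        simp
        ring
end Prob
section Game

noncomputable def qq (Q : List Bool → Sym2 ℕ) (N : ℕ) (x : Fin N → Bool) (t : Fin N) : Sym2 ℕ :=
  Q (histSeq (extSeq x) t)

theorem qq_update (Q : List Bool → Sym2 ℕ) {N : ℕ} (x : Fin N → Bool) (t : Fin N) (b : Bool)
    (t' : Fin N) (h : t' ≤ t) : qq Q N (Function.update x t b) t' = qq Q N x t' := by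
  unfold qq histSeq
  congr 1
  refine List.map_congr_left fun i hi => ?_
  have hi' : i < t'.val := List.mem_range.1 hi
  have hN : i < N := hi'.trans t'.2
  simp only [extSeq, hN, dif_pos]
  rw [Function.update_of_ne]
  intro h'
  have h2 : i = t.val := congrArg Fin.val h'
  have h3 : t'.val ≤ t.val := h
  omega

theorem qq_inj {Q : List Bool → Sym2 ℕ} (hQ : ValidBuilder Q) {N : ℕ} (x : Fin N → Bool) :
    Function.Injective (qq Q N x) := by
  have key : ∀ a b : Fin N, a < b → qq Q N x a ≠ qq Q N x b := by
    intro a b hab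
    have hab' : a.val < b.val := hab
    have := hQ.2 (histSeq (extSeq x) b) a (by simpa [histSeq] using hab')
    have e : (histSeq (extSeq x) b).take a = histSeq (extSeq x) a := by
      simp [histSeq, ← List.map_take, List.take_range, min_eq_left hab'.le]
    rw [e] at this
    exact this
  intro a b h
  rcases lt_trichotomy a b with h1 | h1 | h1
  · exact absurd h (key a b h1)
  · exact h1
  · exact absurd h.symm (key b a h1)

theorem exists_bound {N : ℕ} (q : (Fin N → Bool) → Fin N → Sym2 ℕ) :
    ∃ M : ℕ, ∀ x t, ∀ v ∈ q x t, v < M := by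
  have h : ∀ z : Sym2 ℕ, ∃ B : ℕ, ∀ v ∈ z, v < B := by
    intro z
    induction z using Sym2.ind with
    | _ a b =>
    refine ⟨a + b + 1, fun v hv => ?_⟩
    rw [Sym2.mem_iff] at hv
    omega
  choose bd hbd using h
  refine ⟨(Finset.univ : Finset ((Fin N → Bool) × Fin N)).sup (fun z => bd (q z.1 z.2)), ?_⟩
  intro x t v hv
  exact lt_of_lt_of_le (hbd _ v hv)
    (Finset.le_sup (f := fun z : (Fin N → Bool) × Fin N => bd (q z.1 z.2)) (Finset.mem_univ (x, t)))

theorem copy_subset (Q : List Bool → Sym2 ℕ) {N M m : ℕ} (hm : 2 ≤ m) (x : Fin N → Bool)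
    (hM : ∀ t, ∀ v ∈ qq Q N x t, v < M) :
    {f : Fin m → ℕ | Function.Injective f ∧ ∀ i j : Fin m, i ≠ j → ∃ t, t < N ∧
      Q (histSeq (extSeq x) t) = s(f i, f j) ∧ extSeq x t = true} ⊆
    ((Finset.univ.filter fun f : Fin m → Fin M =>
      1 ≤ KW (fun u v : Fin M => ss (qq Q N) (N+1) x s((u : ℕ), (v : ℕ))) f).image
        (fun f i => (f i : ℕ)) : Finset (Fin m → ℕ)) := by
  rintro f ⟨-, hf⟩
  have hlt : ∀ i, f i < M := by
    intro i
    obtain ⟨j, hj⟩ : ∃ j : Fin m, i ≠ j := by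
      haveI : Nontrivial (Fin m) := Fin.nontrivial_iff_two_le.2 hm
      obtain ⟨j, hj⟩ := exists_ne i
      exact ⟨j, hj.symm⟩
    obtain ⟨t, ht, h1, -⟩ := hf i j hj
    refine hM ⟨t, ht⟩ _ ?_
    unfold qq
    rw [h1]
    exact Sym2.mem_mk_left _ _
  rw [Finset.mem_coe, Finset.mem_image]
  refine ⟨fun i => ⟨f i, hlt i⟩, ?_, rfl⟩
  rw [Finset.mem_filter]
  refine ⟨Finset.mem_univ _, ?_⟩
  have hone : ∀ i j : Fin m, (1 : ℝ) ≤
      if i < j then ss (qq Q N) (N+1) x s(f i, f j) else 1 := by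
    intro i j
    split_ifs with hij
    · obtain ⟨t, ht, h1, h2⟩ := hf i j hij.ne
      have h3 : (1 : ℝ) = ww (qq Q N) (N+1) x ⟨t, ht⟩ s(f i, f j) * bb (x ⟨t, ht⟩) := by
        have e1 : x ⟨t, ht⟩ = true := by simpa [extSeq, ht] using h2
        have e2 : light (qq Q N) (N+1) x ⟨t, ht⟩ := by
          intro v _
          unfold deg
          refine Nat.lt_succ_of_le ((Finset.card_le_univ _).trans (by simp))
        unfold ww
        rw [if_pos ⟨h1, e2⟩, e1]
        simp [bb]
      refine h3.le.trans ?_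
      exact Finset.single_le_sum (f := fun t => ww (qq Q N) (N+1) x t s(f i, f j) * bb (x t))
        (fun t _ => mul_nonneg (ww_nonneg ..) (bb_nonneg _)) (Finset.mem_univ _)
    · exact le_rfl
  have h := Finset.prod_le_prod (s := (Finset.univ : Finset (Fin m))) (f := fun _ => (1 : ℝ))
    (g := fun i => ∏ j, if i < j then ss (qq Q N) (N+1) x s(f i, f j) else 1)
    (fun _ _ => zero_le_one) (fun i _ => by
      have := Finset.prod_le_prod (s := (Finset.univ : Finset (Fin m))) (f := fun _ => (1 : ℝ))
        (fun _ _ => zero_le_one) (fun j _ => hone i j)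
      simpa using this)
  simpa [KW] using h

theorem copy_le (Q : List Bool → Sym2 ℕ) {N M m : ℕ} (hm : 2 ≤ m) (x : Fin N → Bool)
    (hM : ∀ t, ∀ v ∈ qq Q N x t, v < M) :
    (copyCount m (fun t => Q (histSeq (extSeq x) t)) (extSeq x) N : ℝ) ≤
      hom (fun u v : Fin M => ss (qq Q N) (N+1) x s((u : ℕ), (v : ℕ))) (fun _ => 1) m := by
  have h1 := Set.ncard_le_ncard (copy_subset Q hm x hM) (Finset.finite_toSet _)
  rw [Set.ncard_coe_finset] at h1
  have h2 := h1.trans Finset.card_image_le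
  have h3 : (copyCount m (fun t => Q (histSeq (extSeq x) t)) (extSeq x) N : ℝ) ≤
    ((Finset.univ.filter fun f : Fin m → Fin M =>
      1 ≤ KW (fun u v : Fin M => ss (qq Q N) (N+1) x s((u : ℕ), (v : ℕ))) f).card : ℝ) := by
    exact_mod_cast h2
  refine h3.trans ?_
  rw [← Finset.sum_boole]
  unfold hom
  refine Finset.sum_le_sum fun f _ => ?_
  simp only [Finset.prod_const_one, one_mul]
  split_ifs with h
  · exact h
  · exact KW_nonneg (fun u v => ss_nonneg ..) f

theorem upper_two {Q : List Bool → Sym2 ℕ} (hQ : ValidBuilder Q) {p : ℝ} (h0 : 0 ≤ p) (h1 : p ≤ 1)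
    (N : ℕ) : expectedCopies 2 Q N p ≤ p * (2 * N) := by
  obtain ⟨M, hM⟩ := exists_bound (qq Q N)
  refine le_trans ?_ (hom_expect_two (q := qq Q N) (qq_inj hQ) h0 h1 M)
  exact Finset.sum_le_sum fun x _ => mul_le_mul_of_nonneg_left (copy_le Q le_rfl x (hM x))
    (weight_nonneg h0 h1 x)

theorem upper_gen {Q : List Bool → Sym2 ℕ} (hQ : ValidBuilder Q) {p : ℝ} (h0 : 0 ≤ p) (h1 : p ≤ 1)
    (N L : ℕ) (hL : 0 < L) {lam : ℝ} (hlam : 0 < lam) (n : ℕ) : expectedCopies (n+3) Q N p ≤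
      p ^ ((n+3).choose 2) * √(2 * N) ^ (n+3) +
      (((n+3).choose 2) * (lam + 4 * N * L / lam ^ 3) + (n+3) * (2 * N / L)) * √(2 * N) ^ (n+2) := by
  obtain ⟨M, hM⟩ := exists_bound (qq Q N)
  refine le_trans ?_ (hom_expect (q := qq Q N) (qq_update Q) (fun x t => hQ.1 _) (qq_inj hQ)
    h0 h1 L M hL hlam n)
  exact Finset.sum_le_sum fun x _ => mul_le_mul_of_nonneg_left (copy_le Q (by omega) x (hM x))
    (weight_nonneg h0 h1 x)

theorem exists_enum : ∃ e : ℕ → Sym2 ℕ, Function.Injective e ∧ (∀ t, ¬ (e t).IsDiag) ∧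
    ∀ n N, n.choose 2 ≤ N → ∀ a b, a < n → b < n → a ≠ b → ∃ t < N, e t = s(a, b) := by
  have hc : ∀ b : ℕ, (b+1).choose 2 = b + b.choose 2 := fun b => by
    rw [Nat.choose_succ_succ' b 1, Nat.choose_one_right]
  have h : ∀ t : ℕ, ∃ a b : ℕ, a < b ∧ t = b.choose 2 + a := by
    intro t
    induction t with
    | zero => exact ⟨0, 1, by simp⟩
    | succ t ih =>
      obtain ⟨a, b, hab, h⟩ := ih
      by_cases h' : a + 1 < b
      · exact ⟨a+1, b, h', by omega⟩
      · refine ⟨0, b+1, by omega, ?_⟩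
        rw [hc]; omega
  have huniq : ∀ a b a' b' : ℕ, a < b → a' < b' → b.choose 2 + a = b'.choose 2 + a' → b ≤ b' := by
    intro a b a' b' h1 h2 h3
    by_contra hlt
    push Not at hlt
    have := Nat.choose_le_choose 2 (show b' + 1 ≤ b by omega)
    rw [hc] at this
    omega
  choose a b hab ht using h
  refine ⟨fun t => s(a t, b t), ?_, ?_, ?_⟩
  · intro t t' h
    simp only [Sym2.eq_iff] at h
    have := hab t; have := hab t'
    have h2 : a t = a t' ∧ b t = b t' := by omega
    rw [ht t, ht t', h2.1, h2.2]
  · intro t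
    simpa using (hab t).ne
  · intro n N hN
    have key : ∀ c d, c < d → d < n → ∃ t < N, s(a t, b t) = s(c, d) := by
      intro c d hcd hd
      refine ⟨d.choose 2 + c, ?_, ?_⟩
      · have := Nat.choose_le_choose 2 (show d + 1 ≤ n by omega)
        rw [hc] at this
        omega
      · have h1 := ht (d.choose 2 + c)
        have h2 := hab (d.choose 2 + c)
        have h3 := huniq _ _ _ _ hcd h2 h1
        have h4 := huniq _ _ _ _ h2 hcd h1.symm
        have h5 : b (d.choose 2 + c) = d := le_antisymm h4 h3
        rw [h5] at h1 ⊢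
        have h6 : a (d.choose 2 + c) = c := by omega
        rw [h6]
    intro c d hc hd hne
    rcases lt_or_gt_of_ne hne with h | h
    · exact key c d h hd
    · obtain ⟨t, h1, h2⟩ := key d c h hc
      exact ⟨t, h1, h2.trans Sym2.eq_swap⟩

theorem lower_gen {p : ℝ} (h0 : 0 ≤ p) (h1 : p ≤ 1) {m : ℕ} (hm : 2 ≤ m) (n N : ℕ)
    (hn : n.choose 2 ≤ N) : ∃ Q : List Bool → Sym2 ℕ, ValidBuilder Q ∧
      p ^ (m.choose 2) * (n.descFactorial m : ℝ) ≤ expectedCopies m Q N p := by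
  obtain ⟨e, einj, ediag, esurj⟩ := exists_enum
  let Q : List Bool → Sym2 ℕ := fun h => e h.length
  have hQ : ValidBuilder Q := by
    refine ⟨fun h => ediag _, fun h i hi heq => ?_⟩
    have := einj heq
    rw [List.length_take] at this
    omega
  refine ⟨Q, hQ, ?_⟩
  have hQe : ∀ (y : ℕ → Bool) t, Q (histSeq y t) = e t := fun y t => by simp [Q, histSeq]
  obtain ⟨M, hM⟩ := exists_bound (qq Q N)
  let T : (Fin m ↪ Fin n) → Finset (Fin N) := fun f => Finset.univ.filter fun t =>
    ∃ z : Sym2 (Fin m), ¬ z.IsDiag ∧ e t = z.map (fun i => (f i : ℕ))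
  have hT : ∀ f, (T f).card ≤ m.choose 2 := by
    intro f
    have e1 : ((T f).image (fun t : Fin N => e t)).card = (T f).card :=
      Finset.card_image_of_injective _ (fun a b h => Fin.ext (einj h))
    have e2 : (T f).image (fun t : Fin N => e t) ⊆
        (Finset.univ.filter fun z : Sym2 (Fin m) => ¬ z.IsDiag).image
          (Sym2.map (fun i => (f i : ℕ))) := by
      intro w hw
      rw [Finset.mem_image] at hw
      obtain ⟨t, ht, rfl⟩ := hw
      rw [Finset.mem_filter] at ht
      obtain ⟨-, z, hz, h⟩ := ht
      rw [Finset.mem_image]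
      exact ⟨z, by simpa using hz, h.symm⟩
    have e3 : (Finset.univ.filter fun z : Sym2 (Fin m) => ¬ z.IsDiag).card = m.choose 2 := by
      have := Sym2.card_subtype_not_diag (α := Fin m)
      rw [Fintype.card_fin] at this
      rw [← this, Fintype.card_subtype]
    rw [← e1, ← e3]
    exact (Finset.card_le_card e2).trans Finset.card_image_le
  have hcount : ∀ x : Fin N → Bool, ∑ f : Fin m ↪ Fin n, ∏ t ∈ T f, bb (x t) ≤
      (copyCount m (fun t => Q (histSeq (extSeq x) t)) (extSeq x) N : ℝ) := by
    intro x
    have e1 : ∀ f : Fin m ↪ Fin n, ∏ t ∈ T f, bb (x t) = if ∀ t ∈ T f, x t = true then 1 else 0 := by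
      intro f
      unfold bb
      rw [Finset.prod_ite_zero]
      simp
    simp only [e1]
    rw [Finset.sum_boole]
    norm_cast
    rw [← Set.ncard_coe_finset]
    unfold copyCount
    refine Set.ncard_le_ncard_of_injOn (fun f i => (f i : ℕ)) ?_ ?_
      ((Finset.finite_toSet _).subset (copy_subset Q hm x (hM x)))
    · intro f hf
      have hf' : ∀ t ∈ T f, x t = true := by simpa using hf
      refine ⟨fun i j h => f.injective (Fin.ext h), fun i j hij => ?_⟩
      obtain ⟨t, htN, ht⟩ := esurj n N hn (f i) (f j) (f i).2 (f j).2
        (fun h => hij (f.injective (Fin.ext h)))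
      refine ⟨t, htN, by simp only [hQe]; exact ht, ?_⟩
      have := hf' ⟨t, htN⟩ (by
        simp only [T, Finset.mem_filter, Finset.mem_univ, true_and]
        exact ⟨s(i, j), by simpa using hij, by simpa using ht⟩)
      simpa [extSeq, htN] using this
    · intro f _ g _ hfg
      ext i
      exact congrFun hfg i
  unfold expectedCopies
  calc _ = ∑ f : Fin m ↪ Fin n, p ^ (m.choose 2) := by
        simp [Fintype.card_embedding_eq, mul_comm]
    _ ≤ ∑ f : Fin m ↪ Fin n, ∑ x : Fin N → Bool, weight p x * ∏ t ∈ T f, bb (x t) := by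
        refine Finset.sum_le_sum fun f _ => ?_
        rw [sum_weight_bb]
        exact pow_le_pow_of_le_one h0 h1 (hT f)
    _ = ∑ x : Fin N → Bool, weight p x * ∑ f : Fin m ↪ Fin n, ∏ t ∈ T f, bb (x t) := by
        rw [Finset.sum_comm]
        simp only [Finset.mul_sum]
    _ ≤ _ := Finset.sum_le_sum fun x _ => mul_le_mul_of_nonneg_left (hcount x) (weight_nonneg h0 h1 x)

theorem lower_asym {p : ℝ} (h0 : 0 < p) (h1 : p < 1) {m : ℕ} (hm : 2 ≤ m) {ε : ℝ} (hε : 0 < ε) :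
    ∃ X : ℝ, ∀ N : ℕ, X ≤ N → ∃ Q : List Bool → Sym2 ℕ, ValidBuilder Q ∧
      (1 - ε) * p ^ (m.choose 2) * √(2 * N) ^ m ≤ expectedCopies m Q N p := by
  have hm0 : (0:ℝ) < m := by exact_mod_cast (by omega : 0 < m)
  refine ⟨(m + m ^ 2 / ε) ^ 2, fun N hN => ?_⟩
  set R := √(2 * (N:ℝ)) with hR
  have hR1 : m + m ^ 2 / ε ≤ R := by
    refine Real.le_sqrt_of_sq_le ?_
    have : (0:ℝ) ≤ N := Nat.cast_nonneg _
    linarith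
  have hme : 0 ≤ (m:ℝ) ^ 2 / ε := by positivity
  have hRm : (m:ℝ) ≤ R := by linarith
  have hRe : (m:ℝ) ^ 2 / ε ≤ R := by linarith
  have hRpos : 0 < R := by linarith
  set n := Nat.sqrt (2 * N) with hn
  have hn1 : n.choose 2 ≤ N := by
    rw [Nat.choose_two_right]
    have h := Nat.sqrt_le (2 * N)
    rw [← hn] at h
    have : n * (n - 1) ≤ n * n := Nat.mul_le_mul_left _ (Nat.sub_le _ _)
    omega
  obtain ⟨Q, hQ, h⟩ := lower_gen h0.le h1.le hm n N hn1
  refine ⟨Q, hQ, le_trans ?_ h⟩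
  have hRn : R ≤ n + 1 := by
    refine Real.sqrt_le_iff.2 ⟨by positivity, ?_⟩
    have h := Nat.lt_succ_sqrt (2 * N)
    rw [← hn] at h
    have h' : ((2 * N : ℕ) : ℝ) < ((n.succ * n.succ : ℕ) : ℝ) := by exact_mod_cast h
    push_cast at h'
    nlinarith
  have hd : ((n + 1 - m : ℕ) : ℝ) ^ m ≤ n.descFactorial m := by
    exact_mod_cast Nat.pow_sub_le_descFactorial n m
  have hs : R - m ≤ ((n + 1 - m : ℕ) : ℝ) := by
    have : n + 1 ≤ (n + 1 - m) + m := by omega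
    have : ((n + 1 : ℕ) : ℝ) ≤ ((n + 1 - m : ℕ) : ℝ) + m := by exact_mod_cast this
    push_cast at this
    linarith
  have h2 : (R - m) ^ m ≤ n.descFactorial m :=
    (pow_le_pow_left₀ (by linarith) hs m).trans hd
  have h3 : (1 - ε) * R ^ m ≤ (R - m) ^ m := by
    have e : R - m = R * (1 + (-(m / R))) := by field_simp; ring
    rw [e, mul_pow, mul_comm]
    refine mul_le_mul_of_nonneg_left ?_ (by positivity)
    have hb := one_add_mul_le_pow (a := -((m:ℝ) / R)) (by
      have : (m:ℝ) / R ≤ 1 := (div_le_one hRpos).2 hRm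
      linarith) m
    have : (m:ℝ) * (m / R) ≤ ε := by
      rw [div_le_iff₀ hε] at hRe
      rw [← mul_div_assoc, div_le_iff₀ hRpos]
      nlinarith
    linarith
  calc (1 - ε) * p ^ (m.choose 2) * R ^ m = p ^ (m.choose 2) * ((1 - ε) * R ^ m) := by ring
    _ ≤ _ := mul_le_mul_of_nonneg_left (h3.trans h2) (by positivity)

theorem upper_asym {p : ℝ} (h0 : 0 < p) (h1 : p < 1) {m : ℕ} (hm : 2 ≤ m) {ε : ℝ} (hε : 0 < ε) :
    ∃ X : ℝ, ∀ N : ℕ, X ≤ N → ∀ Q : List Bool → Sym2 ℕ, ValidBuilder Q →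
      expectedCopies m Q N p ≤ (1 + ε) * p ^ (m.choose 2) * √(2 * N) ^ m := by
  rcases hm.eq_or_lt with rfl | hm3
  · refine ⟨0, fun N _ Q hQ => (upper_two hQ h0.le h1.le N).trans ?_⟩
    rw [Real.sq_sqrt (by positivity)]
    simp only [Nat.choose_self, pow_one]
    have : 0 ≤ p * (2 * (N:ℝ)) := by positivity
    nlinarith
  · obtain ⟨n, rfl⟩ : ∃ n, m = n + 3 := ⟨m - 3, by omega⟩
    set k := (n+3).choose 2 with hk
    have hk0 : (0:ℝ) < k := by exact_mod_cast Nat.choose_pos (by omega)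
    set η := ε * p ^ k / (6 * k) with hη
    have hη0 : 0 < η := by positivity
    have hηk : 6 * k * η = ε * p ^ k := by rw [hη]; field_simp
    set R0 := 4 * (n+3) / (η ^ 4 * (ε * p ^ k)) with hR0
    have hR00 : 0 ≤ R0 := by positivity
    refine ⟨1 + R0 ^ 2 + 1 / η ^ 4, fun N hN Q hQ => ?_⟩
    have hie : 0 ≤ 1 / η ^ 4 := by positivity
    have hN1 : (1:ℝ) ≤ N := by nlinarith [sq_nonneg R0]
    have hN2 : R0 ^ 2 ≤ N := by linarith
    have hN3 : 1 / η ^ 4 ≤ N := by nlinarith [sq_nonneg R0]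
    set R := √(2 * (N:ℝ)) with hR
    have hRpos : 0 < R := Real.sqrt_pos.2 (by linarith)
    have hR2 : R ^ 2 = 2 * N := Real.sq_sqrt (by linarith)
    have hRR0 : R0 ≤ R := Real.le_sqrt_of_sq_le (by linarith)
    have hη4 : 1 ≤ η ^ 4 * N := by
      rw [div_le_iff₀ (by positivity)] at hN3
      linarith
    set L := ⌈η ^ 4 * (N:ℝ)⌉₊ with hL
    have hL1 : η ^ 4 * N ≤ L := Nat.le_ceil _
    have hL2 : (L:ℝ) ≤ 2 * (η ^ 4 * N) := by
      have := Nat.ceil_lt_add_one (show 0 ≤ η ^ 4 * (N:ℝ) by positivity)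
      linarith
    have hLpos : 0 < L := Nat.ceil_pos.2 (by linarith)
    refine (upper_gen hQ h0.le h1.le N L hLpos (lam := η * R) (by positivity) n).trans ?_
    have c1 : 4 * N * L / (η * R) ^ 3 ≤ 2 * (η * R) := by
      rw [div_le_iff₀ (by positivity)]
      have : 2 * (η * R) * (η * R) ^ 3 = 2 * η ^ 4 * (R ^ 2) ^ 2 := by ring
      rw [this, hR2]
      nlinarith
    have c2 : 2 * (N:ℝ) / L ≤ 2 / η ^ 4 := by
      rw [div_le_div_iff₀ (by exact_mod_cast hLpos) (by positivity)]
      nlinarith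
    have c3 : ((n:ℝ)+3) * (2 / η ^ 4) ≤ ε * p ^ k / 2 * R := by
      rw [hR0, div_le_iff₀ (by positivity)] at hRR0
      rw [← mul_div_assoc, div_le_iff₀ (by positivity)]
      nlinarith
    have c4 : k * (η * R + 4 * N * L / (η * R) ^ 3) + (n+3) * (2 * N / L) ≤ ε * p ^ k * R := by
      have d1 : k * (η * R + 4 * N * L / (η * R) ^ 3) ≤ k * (3 * (η * R)) :=
        mul_le_mul_of_nonneg_left (by linarith) hk0.le
      have d2 : ((n:ℝ)+3) * (2 * N / L) ≤ ((n:ℝ)+3) * (2 / η ^ 4) :=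
        mul_le_mul_of_nonneg_left c2 (by positivity)
      have d3 : k * (3 * (η * R)) = ε * p ^ k / 2 * R := by
        rw [← hηk]; ring
      linarith
    have c5 := mul_le_mul_of_nonneg_right c4 (show 0 ≤ R ^ (n+2) by positivity)
    calc _ ≤ p ^ k * R ^ (n+3) + ε * p ^ k * R * R ^ (n+2) := by linarith
      _ = _ := by ring

end Game

theorem stmt10 (m : ℕ) (hm : 2 ≤ m) (p : ℝ) (hp : p ∈ Set.Ioo (0 : ℝ) 1)
    (ε : ℝ) (hε : 0 < ε) :
    ∃ C : ℝ, 0 < C ∧ ∀ N : ℕ,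
      C * p ^ (-(2 * (m : ℝ) - 1)) * (Real.log (1 / p)) ^ 2 ≤ (N : ℝ) →
      (1 - ε) * p ^ (m.choose 2 : ℕ) * (2 * (N : ℝ)) ^ ((m : ℝ) / 2) ≤ tQuery m p N ∧
        tQuery m p N ≤ (1 + ε) * p ^ (m.choose 2 : ℕ) * (2 * (N : ℝ)) ^ ((m : ℝ) / 2) := by
  obtain ⟨h0, h1⟩ := hp
  obtain ⟨X1, hX1⟩ := lower_asym h0 h1 hm hε
  obtain ⟨X2, hX2⟩ := upper_asym h0 h1 hm hε
  have hc1 : 0 < p ^ (-(2 * (m : ℝ) - 1)) := Real.rpow_pos_of_pos h0 _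
  have hc2 : 0 < (Real.log (1 / p)) ^ 2 := by
    have : 0 < Real.log (1 / p) := Real.log_pos (by rw [lt_div_iff₀ h0]; linarith)
    positivity
  set c := p ^ (-(2 * (m : ℝ) - 1)) * (Real.log (1 / p)) ^ 2 with hc
  have hc0 : 0 < c := mul_pos hc1 hc2
  refine ⟨(|X1| + |X2| + 1) / c, by positivity, fun N hN => ?_⟩
  rw [mul_assoc, ← hc, div_mul_cancel₀ _ hc0.ne'] at hN
  have hN1 : X1 ≤ N := by linarith [le_abs_self X1, abs_nonneg X2]
  have hN2 : X2 ≤ N := by linarith [le_abs_self X2, abs_nonneg X1]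
  have hpow : (2 * (N : ℝ)) ^ ((m : ℝ) / 2) = √(2 * (N : ℝ)) ^ m := by
    rw [Real.sqrt_eq_rpow, ← Real.rpow_natCast, ← Real.rpow_mul (by positivity)]
    congr 1
    ring
  rw [hpow]
  obtain ⟨Q, hQ, hl⟩ := hX1 N hN1
  have hub : ∀ E ∈ {E : ℝ | ∃ Q : List Bool → Sym2 ℕ, ValidBuilder Q ∧ E = expectedCopies m Q N p},
      E ≤ (1 + ε) * p ^ (m.choose 2 : ℕ) * √(2 * (N : ℝ)) ^ m := by
    rintro E ⟨Q', hQ', rfl⟩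
    exact hX2 N hN2 Q' hQ'
  refine ⟨hl.trans (le_csSup ⟨_, hub⟩ ⟨Q, hQ, rfl⟩), csSup_le ⟨_, Q, hQ, rfl⟩ hub⟩

end OnlineRamseyGame
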